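/- Let A ∈ ℝ^{n×n} be symmetric positive definite, let d_i(A) denote its i-th largest diagonal entry, λ_i(A) its i-th largest eigenvalue, and D = diag(a_{ii}^{−1/2}). Then κ₂(DAD) ≤ n/λ_n(DAD) ≤ n·e·∏_{i=1}^{n} d_i(A)/λ_i(A), where e is Euler's constant. -/

import Mathlib

/-!
The matrix `H = D A D` is positive definite with unit diagonal, so its eigenvalues are positive
and sum to `trace H = n`; in particular `λ₁(H) ≤ n`, which is the first inequality.

For the second, `det H = det A / ∏ aᵢᵢ`, so the product on the right is `1 / det H`, and
`det H = λₙ(H) * P`, where `P` is the product of the remaining `n - 1` eigenvalues. Hence it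
suffices that `P ≤ e`. This follows from `x ≤ exp (x - 1)` applied to each factor:
`P ≤ exp (n - λₙ(H) - (n - 1)) ≤ exp 1`.
-/

open Matrix BigOperators

/-- The `k`-th largest eigenvalue of a real matrix (zero if not Hermitian). -/
noncomputable def eigval {n : ℕ} (A : Matrix (Fin n) (Fin n) ℝ) (k : Fin n) : ℝ :=
  if h : A.IsHermitian then h.eigenvalues ((Tuple.sort h.eigenvalues) k.rev) else 0

/-- The spectral (operator 2-) norm of a real matrix. -/
noncomputable def specNorm {n : ℕ} (A : Matrix (Fin n) (Fin n) ℝ) : ℝ :=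
  ‖LinearMap.toContinuousLinearMap (Matrix.toEuclideanLin A)‖

/-- The Frobenius norm of a real matrix. -/
noncomputable def frobNorm {n : ℕ} (A : Matrix (Fin n) (Fin n) ℝ) : ℝ :=
  Real.sqrt (∑ i, ∑ j, (A i j) ^ 2)

/-- The off-quantity `off(A) = ‖A - diag(A)‖_F`. -/
noncomputable def offQ {n : ℕ} (A : Matrix (Fin n) (Fin n) ℝ) : ℝ :=
  frobNorm (A - Matrix.diagonal (fun i => A i i))

/-- Condition number κ₂(A) = λ₁(A)/λ_n(A). -/
noncomputable def kappa {n : ℕ} [NeZero n] (A : Matrix (Fin n) (Fin n) ℝ) : ℝ :=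
  eigval A 0 / eigval A (Fin.rev 0)

/-- The diagonally scaled matrix `D A D`, `D = diag(a_ii^{-1/2})`. -/
noncomputable def scaled {n : ℕ} (A : Matrix (Fin n) (Fin n) ℝ) : Matrix (Fin n) (Fin n) ℝ :=
  Matrix.diagonal (fun i => (Real.sqrt (A i i))⁻¹) * A *
    Matrix.diagonal (fun i => (Real.sqrt (A i i))⁻¹)

/-- The scaled condition number κ₂ˢ(A) = κ₂(D A D). -/
noncomputable def kappaS {n : ℕ} [NeZero n] (A : Matrix (Fin n) (Fin n) ℝ) : ℝ :=
  kappa (scaled A)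

/-- Entrywise absolute value of a matrix. -/
noncomputable def absM {n : ℕ} (A : Matrix (Fin n) (Fin n) ℝ) : Matrix (Fin n) (Fin n) ℝ :=
  Matrix.of fun i j => |A i j|

/-- The `k`-th largest diagonal entry of a real matrix. -/
noncomputable def diagSorted {n : ℕ} (A : Matrix (Fin n) (Fin n) ℝ) (k : Fin n) : ℝ :=
  (fun i => A i i) ((Tuple.sort (fun i => A i i)) k.rev)

theorem eigval_eq {n : ℕ} {A : Matrix (Fin n) (Fin n) ℝ} (h : A.IsHermitian) (k : Fin n) :
    eigval A k = h.eigenvalues ((Tuple.sort h.eigenvalues) k.rev) :=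
  dif_pos h

theorem eigval_pos {n : ℕ} {A : Matrix (Fin n) (Fin n) ℝ} (h : A.PosDef) (k : Fin n) :
    0 < eigval A k := by
  rw [eigval_eq h.isHermitian]
  exact h.eigenvalues_pos _

theorem sum_eigval {n : ℕ} {A : Matrix (Fin n) (Fin n) ℝ} (h : A.IsHermitian) :
    ∑ k, eigval A k = A.trace := by
  simp only [eigval_eq h]
  refine ((Fin.revPerm.trans (Tuple.sort h.eigenvalues)).sum_comp h.eigenvalues).trans ?_
  simpa using h.trace_eq_sum_eigenvalues.symm

theorem prod_eigval {n : ℕ} {A : Matrix (Fin n) (Fin n) ℝ} (h : A.IsHermitian) :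
    ∏ k, eigval A k = A.det := by
  simp only [eigval_eq h]
  refine ((Fin.revPerm.trans (Tuple.sort h.eigenvalues)).prod_comp h.eigenvalues).trans ?_
  simpa using h.det_eq_prod_eigenvalues.symm

theorem prod_diagSorted {n : ℕ} (A : Matrix (Fin n) (Fin n) ℝ) :
    ∏ k, diagSorted A k = ∏ i, A i i :=
  (Fin.revPerm.trans (Tuple.sort fun i => A i i)).prod_comp fun i => A i i

theorem scaled_apply {n : ℕ} (A : Matrix (Fin n) (Fin n) ℝ) (i j : Fin n) :
    scaled A i j = (Real.sqrt (A i i))⁻¹ * A i j * (Real.sqrt (A j j))⁻¹ := by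
  simp [scaled, Matrix.mul_diagonal, Matrix.diagonal_mul]

theorem scaled_posDef {n : ℕ} {A : Matrix (Fin n) (Fin n) ℝ} (hA : A.PosDef) :
    (scaled A).PosDef := by
  have hd : ∀ i, (Real.sqrt (A i i))⁻¹ ≠ 0 := fun i =>
    inv_ne_zero (Real.sqrt_pos.2 hA.diag_pos).ne'
  set D := Matrix.diagonal fun i => (Real.sqrt (A i i))⁻¹ with hD
  have hDu : IsUnit D := by
    rw [Matrix.isUnit_iff_isUnit_det, hD, Matrix.det_diagonal, isUnit_iff_ne_zero]
    exact Finset.prod_ne_zero_iff.2 fun i _ => hd i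
  have hDt : Dᴴ = D := by simp [hD]
  have h := hA.conjTranspose_mul_mul_same (Matrix.mulVec_injective_of_isUnit hDu)
  rwa [hDt] at h

theorem scaled_trace {n : ℕ} {A : Matrix (Fin n) (Fin n) ℝ} (hA : A.PosDef) :
    (scaled A).trace = n := by
  have h1 : ∀ i, scaled A i i = 1 := fun i => by
    have hp : 0 < A i i := hA.diag_pos
    have hs := Real.sqrt_pos.2 hp
    rw [scaled_apply]
    field_simp
    exact (Real.sq_sqrt hp.le).symm
  simp [Matrix.trace, h1]

theorem scaled_det {n : ℕ} {A : Matrix (Fin n) (Fin n) ℝ} (hA : A.PosDef) :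
    (scaled A).det = A.det / ∏ i, A i i := by
  have hp : (∏ i, (Real.sqrt (A i i))) * (∏ i, (Real.sqrt (A i i))) = ∏ i, A i i := by
    rw [← Finset.prod_mul_distrib]
    exact Finset.prod_congr rfl fun i _ => Real.mul_self_sqrt hA.diag_pos.le
  rw [scaled, Matrix.det_mul, Matrix.det_mul, Matrix.det_diagonal, Finset.prod_inv_distrib, ← hp,
    div_eq_mul_inv, mul_inv]
  ring

/-- Deleting one term from `n` nonnegative reals with sum at most `n` leaves a product of at
most `e`, since each remaining factor satisfies `x ≤ exp (x - 1)`. -/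
theorem prod_erase_le_exp_one {n : ℕ} (x : Fin n → ℝ) (hx : ∀ i, 0 ≤ x i)
    (hs : ∑ i, x i ≤ n) (k : Fin n) : ∏ i ∈ Finset.univ.erase k, x i ≤ Real.exp 1 := by
  calc ∏ i ∈ Finset.univ.erase k, x i
      ≤ ∏ i ∈ Finset.univ.erase k, Real.exp (x i - 1) :=
        Finset.prod_le_prod (fun i _ => hx i) fun i _ => by
          linarith [Real.add_one_le_exp (x i - 1)]
    _ = Real.exp (∑ i ∈ Finset.univ.erase k, (x i - 1)) := (Real.exp_sum _ _).symm
    _ ≤ Real.exp 1 := by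
        have h := Finset.add_sum_erase Finset.univ (fun i => x i - 1) (Finset.mem_univ k)
        have h2 : ∑ i, (x i - 1) = ∑ i, x i - n := by simp [Finset.sum_sub_distrib]
        rw [Real.exp_le_exp]
        simp only [h2] at h
        linarith [hx k]

/-- Demmel–Veselić, Prop. 6.2: bound on the scaled condition number
via the Hadamard-type product of diagonal entries over eigenvalues. -/
theorem stmt14 {n : ℕ} [NeZero n] (A : Matrix (Fin n) (Fin n) ℝ) (hA : A.PosDef) :
    kappa (scaled A) ≤ (n : ℝ) / eigval (scaled A) (Fin.rev 0) ∧
      (n : ℝ) / eigval (scaled A) (Fin.rev 0) ≤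
        (n : ℝ) * Real.exp 1 * ∏ i, diagSorted A i / eigval A i := by
  have hH := scaled_posDef hA
  have hpos := eigval_pos hH
  have hsum : ∑ k, eigval (scaled A) k = n := by
    rw [sum_eigval hH.isHermitian, scaled_trace hA]
  refine ⟨?_, ?_⟩
  · refine div_le_div_of_nonneg_right ?_ (hpos _).le
    rw [← hsum]
    exact Finset.single_le_sum (fun i _ => (hpos i).le) (Finset.mem_univ 0)
  · have hprod : ∏ i, diagSorted A i / eigval A i = ((scaled A).det)⁻¹ := by
      rw [Finset.prod_div_distrib, prod_diagSorted, prod_eigval hA.isHermitian, scaled_det hA,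
        inv_div]
    have hP := prod_erase_le_exp_one _ (fun i => (hpos i).le) hsum.le (Fin.rev 0)
    have hPpos : 0 < ∏ i ∈ Finset.univ.erase (Fin.rev 0), eigval (scaled A) i :=
      Finset.prod_pos fun i _ => hpos i
    have hl := hpos (Fin.rev 0)
    rw [hprod, ← prod_eigval hH.isHermitian,
      ← Finset.mul_prod_erase Finset.univ _ (Finset.mem_univ (Fin.rev 0)), mul_assoc,
      div_eq_mul_inv, mul_inv]
    refine mul_le_mul_of_nonneg_left ?_ (Nat.cast_nonneg n)
    rw [mul_left_comm]
    refine le_mul_of_one_le_right (inv_pos.2 hl).le ?_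
    rw [← div_eq_mul_inv]
    exact (one_le_div hPpos).2 hP
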